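/- arXiv:1506.02913 — 3 statements merged into one kernel-verified Lean document; each statement's English description precedes it below -/
import Mathlib

section
/- There is a decreasing chain of 7 word equations in 3 variables with solutions taken in the free semigroup on two letters; explicitly, with variables x, y, z, the sequence xxyz = zxyx; xxyxzyz = zzyxxyx; xz = zx; xy = yx; x = y; x = z; xx = x is a decreasing chain. Hence dc₊(3) ≥ 7 for free semigroups. -/
/-- A semigroup morphism `h` from the free semigroup on the variables `Ξ` to a
semigroup `S` is a solution of the equation `E = (U, V)` if `h U = h V`. -/
def IsSolutionS {Ξ S : Type*} [Semigroup S] (h : FreeSemigroup Ξ →ₙ* S)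
    (E : FreeSemigroup Ξ × FreeSemigroup Ξ) : Prop :=
  h E.1 = h E.2

/-- The variable `x`. -/
def x : FreeSemigroup (Fin 3) := FreeSemigroup.of 0
/-- The variable `y`. -/
def y : FreeSemigroup (Fin 3) := FreeSemigroup.of 1
/-- The variable `z`. -/
def z : FreeSemigroup (Fin 3) := FreeSemigroup.of 2

/-- The sequence of equations
`xxyz = zxyx; xxyxzyz = zzyxxyx; xz = zx; xy = yx; x = y; x = z; xx = x`. -/
def chain3plus : Fin 7 → FreeSemigroup (Fin 3) × FreeSemigroup (Fin 3) :=
  ![(x * x * y * z, z * x * y * x),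
    (x * x * y * x * z * y * z, z * z * y * x * x * y * x),
    (x * z, z * x),
    (x * y, y * x),
    (x, y),
    (x, z),
    (x * x, x)]

/-!
Evaluate `x`, `y`, `z` in the free semigroup on letters `a ≠ b`. The initial segments of the chain
are solved for structural reasons, valid in any semigroup: `z = xxyx` solves the first two
equations, `z = x` the first three, and pairwise commuting values the first four, as these are
balanced. In each case suitable short words violate the next equation, as one sees by comparing
letters or lengths. Only the violation of the second equation takes an ad hoc solution of the first,
namely `y = txxt`, `z = xxtx`.
-/

open FreeSemigroup

section Words

variable {α : Type*}

theorem freeSemigroup_mul_ne_left (u v : FreeSemigroup α) : u * v ≠ u := by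
  intro huv
  have hlength : u.length + v.length = u.length := by rw [← length_mul, huv]
  have hpos : 0 < v.length := Nat.succ_pos _
  lia

theorem freeSemigroup_commute_of_of_iff {a b : α} : Commute (of a) (of b) ↔ a = b := by
  simp [commute_iff_eq, FreeSemigroup.ext_iff, eq_comm]

end Words

section Solutions

variable {S : Type*} [Semigroup S]

/-- The morphism with `x ↦ u`, `y ↦ v`, `z ↦ w`, used to write down solutions explicitly. -/
def assignment (u v w : S) : FreeSemigroup (Fin 3) →ₙ* S :=
  FreeSemigroup.lift ![u, v, w]

@[simp]
theorem assignment_x (u v w : S) : assignment u v w x = u := by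
  simp [assignment, x]

@[simp]
theorem assignment_y (u v w : S) : assignment u v w y = v := by
  simp [assignment, y]

@[simp]
theorem assignment_z (u v w : S) : assignment u v w z = w := by
  simp [assignment, z]

variable {h : FreeSemigroup (Fin 3) →ₙ* S}

theorem isSolutionS_chain3plus_of_lt_one {t : S} (hy : h y = t * h x * h x * t)
    (hz : h z = h x * h x * t * h x) : ∀ j < 1, IsSolutionS h (chain3plus j) := by
  simp [chain3plus, IsSolutionS, hy, hz, mul_assoc]

theorem isSolutionS_chain3plus_of_lt_two (hz : h z = h x * h x * h y * h x) :
    ∀ j < 2, IsSolutionS h (chain3plus j) := by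
  simp [Fin.forall_fin_succ, chain3plus, IsSolutionS, hz, mul_assoc]

theorem isSolutionS_chain3plus_of_lt_three (hz : h z = h x) :
    ∀ j < 3, IsSolutionS h (chain3plus j) := by
  simp [Fin.forall_fin_succ, chain3plus, IsSolutionS, hz, mul_assoc]

theorem isSolutionS_chain3plus_of_lt_four (hxy : Commute (h x) (h y)) (hxz : Commute (h x) (h z))
    (hyz : Commute (h y) (h z)) : ∀ j < 4, IsSolutionS h (chain3plus j) := by
  have first_eq : h x * h x * h y * h z = h z * h x * h y * h x := calc
    h x * h x * h y * h z = h z * (h x * h x * h y) :=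
      ((hxz.mul_left hxz).mul_left hyz).eq
    _ = h z * (h x * (h y * h x)) := by rw [mul_assoc, hxy.eq]
    _ = h z * h x * h y * h x := by simp only [mul_assoc]
  have second_eq : h x * h x * h y * h x * h z * h y * h z =
      h z * h z * h y * h x * h x * h y * h x := by
    have hx : Commute (h x) (h z * h z * h y) := (hxz.mul_right hxz).mul_right hxy
    have hy : Commute (h y) (h z * h z * h y) :=
      (hyz.mul_right hyz).mul_right (Commute.refl _)
    calc
      h x * h x * h y * h x * h z * h y * h z = h x * h x * h y * h x * (h z * h z * h y) := by
        simp only [mul_assoc, hyz.eq]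
      _ = h z * h z * h y * (h x * h x * h y * h x) :=
        (((hx.mul_left hx).mul_left hy).mul_left hx).eq
      _ = h z * h z * h y * h x * h x * h y * h x := by simp only [mul_assoc]
  simp [Fin.forall_fin_succ, chain3plus, IsSolutionS, first_eq, second_eq, hxy.eq, hxz.eq]

theorem isSolutionS_chain3plus_of_lt_five (hy : h y = h x) (hxz : Commute (h x) (h z)) :
    ∀ j < 5, IsSolutionS h (chain3plus j) := by
  intro j hj
  obtain hj | rfl : j < 4 ∨ j = 4 := by lia
  · exact isSolutionS_chain3plus_of_lt_four (hy ▸ Commute.refl _) hxz (hy ▸ hxz) j hj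
  · exact hy.symm

theorem isSolutionS_chain3plus_of_lt_six (hy : h y = h x) (hz : h z = h x) :
    ∀ j < 6, IsSolutionS h (chain3plus j) := by
  simp [Fin.forall_fin_succ, chain3plus, IsSolutionS, hy, hz, mul_assoc]

end Solutions

theorem chain3plus_is_decreasing_chain_general {α : Type*} [Nontrivial α] :
    ∀ i : Fin 7, ∃ h : FreeSemigroup (Fin 3) →ₙ* FreeSemigroup α,
      (∀ j : Fin 7, j < i → IsSolutionS h (chain3plus j)) ∧ ¬ IsSolutionS h (chain3plus i) := by
  obtain ⟨a, b, hab⟩ := exists_pair_ne α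
  let A := of a
  let B := of b
  intro i
  fin_cases i
  · refine ⟨assignment A B B, by simp, fun heq ↦ hab ?_⟩
    exact congrArg FreeSemigroup.head heq
  · refine ⟨assignment A (B * A * A * B) (A * A * B * A),
      isSolutionS_chain3plus_of_lt_one (t := B) (by simp) (by simp), fun heq ↦ hab.symm ?_⟩
    -- Since `tail` omits the first letter, this compares the sixth letters.
    exact Option.some.inj (congrArg (·.tail[4]?) heq)
  · refine ⟨assignment A B (A * A * B * A), isSolutionS_chain3plus_of_lt_two (by simp),
      fun heq ↦ hab ?_⟩
    exact Option.some.inj (congrArg (·.tail[1]?) heq)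
  · refine ⟨assignment A B A, isSolutionS_chain3plus_of_lt_three (by simp), fun heq ↦ hab ?_⟩
    exact freeSemigroup_commute_of_of_iff.mp heq
  · exact ⟨assignment A (A * A) A, isSolutionS_chain3plus_of_lt_four (by simp) (by simp) (by simp),
      (freeSemigroup_mul_ne_left A A).symm⟩
  · exact ⟨assignment A A (A * A), isSolutionS_chain3plus_of_lt_five (by simp) (by simp),
      (freeSemigroup_mul_ne_left A A).symm⟩
  · exact ⟨assignment A A A, isSolutionS_chain3plus_of_lt_six (by simp) (by simp),
      freeSemigroup_mul_ne_left A A⟩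

/-- The above sequence of 7 word equations in 3 variables is a decreasing chain,
with solutions taken in the free semigroup on two letters. Hence dc₊(3) ≥ 7. -/
theorem chain3plus_is_decreasing_chain :
    ∀ i : Fin 7, ∃ h : FreeSemigroup (Fin 3) →ₙ* FreeSemigroup (Fin 2),
      (∀ j : Fin 7, j < i → IsSolutionS h (chain3plus j)) ∧ ¬ IsSolutionS h (chain3plus i) :=
  chain3plus_is_decreasing_chain_general
end

section
/- For every n ≥ 4 there is an independent system of (n² − 5n + 6)/2 word equations in n variables, with solutions taken in the free monoid on two letters, having a nonperiodic solution. Explicitly, with variables x, y, z_1, …, z_{n−2}, the system consisting of the equations x y x z_i z_j y z_i z_j = z_i z_j x z_i z_j y x y, for 1 ≤ i < j ≤ n−2, is independent and has a nonperiodic solution. Hence is'(n) ≥ (n² − 5n + 6)/2. -/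
/-- A monoid morphism `h` from the free monoid on the variables `Ξ` to a monoid `M`
is a solution of the equation `E = (U, V)` if `h U = h V`. -/
def IsSolution {Ξ M : Type*} [Monoid M] (h : FreeMonoid Ξ →* M)
    (E : FreeMonoid Ξ × FreeMonoid Ξ) : Prop :=
  h E.1 = h E.2

/-- A solution is periodic if the images of all variables are powers of a common word. -/
def IsPeriodic {Ξ A : Type*} (h : FreeMonoid Ξ →* FreeMonoid A) : Prop :=
  ∃ t : FreeMonoid A, ∀ v : Ξ, ∃ k : ℕ, h (FreeMonoid.of v) = t ^ k

/-- The variables are `x`, `y` and `z_1, …, z_(n-2)`, i.e. the `n` elements of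
`Fin 2 ⊕ Fin (n-2)`. The variable `x`. -/
def xv {n : ℕ} : FreeMonoid (Fin 2 ⊕ Fin (n - 2)) := FreeMonoid.of (Sum.inl 0)
/-- The variable `y`. -/
def yv {n : ℕ} : FreeMonoid (Fin 2 ⊕ Fin (n - 2)) := FreeMonoid.of (Sum.inl 1)
/-- The variable `z_k`. -/
def zv {n : ℕ} (k : Fin (n - 2)) : FreeMonoid (Fin 2 ⊕ Fin (n - 2)) :=
  FreeMonoid.of (Sum.inr k)

/-- The equation `x y x z_i z_j y z_i z_j = z_i z_j x z_i z_j y x y`. -/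
def eqn {n : ℕ} (i j : Fin (n - 2)) :
    FreeMonoid (Fin 2 ⊕ Fin (n - 2)) × FreeMonoid (Fin 2 ⊕ Fin (n - 2)) :=
  (xv * yv * xv * zv i * zv j * yv * zv i * zv j,
   zv i * zv j * xv * zv i * zv j * yv * xv * yv)

/-- The system consisting of the above equations for `i < j`. -/
def system (n : ℕ) : Set (FreeMonoid (Fin 2 ⊕ Fin (n - 2)) × FreeMonoid (Fin 2 ⊕ Fin (n - 2))) :=
  {e | ∃ i j : Fin (n - 2), i < j ∧ e = eqn i j}

/-!
Give `x` and `y` noncommuting words `u` and `v`, and let `w` be the word of `z_i z_j`. The equation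
becomes `uvu·w·v·w = w·u·w·v·uv`, which is an identity for `w = 1` and for `w = uv`, whereas for
`w = (uv)²` it forces `uv = vu`. So send a set of the variables `z_k` to `uv` and the others to `1`:
exactly the equations with both indices in that set fail. The set `{i, j}` isolates the equation
of `i < j`, and the empty set gives a common nonperiodic solution.
-/

lemma IsPeriodic.commute {Ξ A : Type*} {h : FreeMonoid Ξ →* FreeMonoid A} (hh : IsPeriodic h)
    (p q : Ξ) : Commute (h (FreeMonoid.of p)) (h (FreeMonoid.of q)) := by
  obtain ⟨t, ht⟩ := hh
  obtain ⟨k, hk⟩ := ht p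
  obtain ⟨l, hl⟩ := ht q
  rw [hk, hl]
  exact Commute.pow_pow_self t k l

lemma freeMonoid_commute_of_of_iff {A : Type*} {a b : A} :
    Commute (FreeMonoid.of a) (FreeMonoid.of b) ↔ a = b := by
  refine ⟨fun h => ?_, fun h => h ▸ Commute.refl _⟩
  exact (List.cons.inj (congrArg FreeMonoid.toList h.eq)).1

lemma freeMonoid_commute_of_mul_mul_eq {A : Type*} {u v s t : FreeMonoid A}
    (h : u * v * s = v * u * t) : Commute u v := by
  have length_eq : (u * v).length = (v * u).length := by
    rw [FreeMonoid.length_mul, FreeMonoid.length_mul, Nat.add_comm]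
  exact List.append_inj_left (congrArg FreeMonoid.toList h) length_eq

section Equation

variable {M : Type*} [Monoid M] {n : ℕ} {i j : Fin (n - 2)}

lemma eqn_inj {k l : Fin (n - 2)} : eqn i j = eqn k l ↔ i = k ∧ j = l := by
  refine ⟨fun h => ?_, fun ⟨hik, hjl⟩ => hik ▸ hjl ▸ rfl⟩
  have letters := congrArg (fun e => FreeMonoid.toList e.1) h
  simp only [eqn, xv, yv, zv, FreeMonoid.toList_mul, FreeMonoid.toList_of, List.cons_append,
    List.nil_append, List.cons.injEq, Sum.inr.injEq, true_and, and_true] at letters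
  exact ⟨letters.1, letters.2.1⟩

lemma isSolution_eqn_iff_of_mul_eq {h : FreeMonoid (Fin 2 ⊕ Fin (n - 2)) →* M} {w : M}
    (hw : h (zv i) * h (zv j) = w) :
    IsSolution h (eqn i j) ↔
      h xv * h yv * h xv * w * h yv * w = w * h xv * w * h yv * h xv * h yv := by
  simp only [IsSolution, eqn, map_mul, ← hw, mul_assoc]

lemma isSolution_eqn_of_mul_eq_one {h : FreeMonoid (Fin 2 ⊕ Fin (n - 2)) →* M}
    (hz : h (zv i) * h (zv j) = 1) : IsSolution h (eqn i j) := by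
  simp [isSolution_eqn_iff_of_mul_eq hz, mul_assoc]

lemma isSolution_eqn_of_mul_eq_mul {h : FreeMonoid (Fin 2 ⊕ Fin (n - 2)) →* M}
    (hz : h (zv i) * h (zv j) = h xv * h yv) : IsSolution h (eqn i j) := by
  simp [isSolution_eqn_iff_of_mul_eq hz, mul_assoc]

lemma commute_of_isSolution_eqn_of_mul_eq_sq {A : Type*}
    {h : FreeMonoid (Fin 2 ⊕ Fin (n - 2)) →* FreeMonoid A}
    (hz : h (zv i) * h (zv j) = (h xv * h yv) ^ 2) (hs : IsSolution h (eqn i j)) :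
    Commute (h xv) (h yv) := by
  rw [isSolution_eqn_iff_of_mul_eq hz] at hs
  generalize h xv = u at hs ⊢
  generalize h yv = v at hs ⊢
  have cancelled : u * v * (u * v * v * u * v * u * v) = v * u * (u * v * u * v * v * u * v) := by
    refine mul_left_cancel (a := u * v * u) ?_
    simpa only [pow_two, mul_assoc] using hs
  exact freeMonoid_commute_of_mul_mul_eq cancelled

end Equation

lemma ncard_system (n : ℕ) : (system n).ncard = (n - 2).choose 2 := by
  let pairs : Finset (Fin (n - 2) × Fin (n - 2)) := {p | p.1 < p.2}
  have image_pairs : system n = (fun p : Fin (n - 2) × Fin (n - 2) => eqn p.1 p.2) '' pairs := by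
    ext e
    simp [pairs, system, eq_comm]
  have eqn_injective : Function.Injective fun p : Fin (n - 2) × Fin (n - 2) => eqn p.1 p.2 :=
    fun p q h => Prod.ext_iff.2 (eqn_inj.1 h)
  rw [image_pairs, Set.ncard_image_of_injective _ eqn_injective, Set.ncard_coe_finset]
  simpa using Finset.card_product_filter_lt (s := (Finset.univ : Finset (Fin (n - 2))))

lemma two_mul_ncard_system {n : ℕ} (hn : 2 ≤ n) :
    2 * ((system n).ncard : ℤ) = (n : ℤ) ^ 2 - 5 * n + 6 := by
  rw [ncard_system]
  qify
  rw [Nat.cast_choose_two, Nat.cast_sub hn]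
  push_cast
  ring

section MarkedHom

variable {M A : Type*} [Monoid M] {n : ℕ}

/-- The substitution `x ↦ u`, `y ↦ v`, with `z_k ↦ uv` for the marked indices `k ∈ s` and
`z_k ↦ 1` for the others; its values on the `z_i z_j` are `1`, `uv` and `(uv)²`. -/
def markedHom (u v : M) (s : Finset (Fin (n - 2))) : FreeMonoid (Fin 2 ⊕ Fin (n - 2)) →* M :=
  FreeMonoid.lift (Sum.elim ![u, v] fun k => if k ∈ s then u * v else 1)

lemma markedHom_xv (u v : M) (s : Finset (Fin (n - 2))) : markedHom u v s xv = u := rfl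

lemma markedHom_yv (u v : M) (s : Finset (Fin (n - 2))) : markedHom u v s yv = v := rfl

lemma markedHom_zv (u v : M) (s : Finset (Fin (n - 2))) (k : Fin (n - 2)) :
    markedHom u v s (zv k) = if k ∈ s then u * v else 1 := rfl

lemma isSolution_markedHom_iff {u v : FreeMonoid A} (huv : ¬ Commute u v)
    (s : Finset (Fin (n - 2))) (i j : Fin (n - 2)) :
    IsSolution (markedHom u v s) (eqn i j) ↔ ¬ (i ∈ s ∧ j ∈ s) := by
  constructor
  · rintro hs ⟨hi, hj⟩
    refine huv (commute_of_isSolution_eqn_of_mul_eq_sq ?_ hs)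
    rw [markedHom_xv, markedHom_yv, markedHom_zv, markedHom_zv, if_pos hi, if_pos hj,
      pow_two]
  · intro hij
    by_cases h : i ∈ s ∨ j ∈ s
    · refine isSolution_eqn_of_mul_eq_mul ?_
      rw [markedHom_xv, markedHom_yv, markedHom_zv, markedHom_zv]
      grind
    · refine isSolution_eqn_of_mul_eq_one ?_
      rw [markedHom_zv, markedHom_zv]
      grind

lemma not_isPeriodic_markedHom {u v : FreeMonoid A} (huv : ¬ Commute u v)
    (s : Finset (Fin (n - 2))) : ¬ IsPeriodic (markedHom u v s) :=
  fun h => huv (h.commute (Sum.inl 0) (Sum.inl 1))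

end MarkedHom

theorem system_card_independent_nonperiodic_general (A : Type*) [Nontrivial A] (n : ℕ)
    (hn : 2 ≤ n) :
    2 * ((system n).ncard : ℤ) = (n : ℤ) ^ 2 - 5 * n + 6 ∧
    (∀ e ∈ system n, ∃ h : FreeMonoid (Fin 2 ⊕ Fin (n - 2)) →* FreeMonoid A,
      (∀ e' ∈ system n, e' ≠ e → IsSolution h e') ∧ ¬ IsSolution h e) ∧
    (∃ h : FreeMonoid (Fin 2 ⊕ Fin (n - 2)) →* FreeMonoid A,
      (∀ e ∈ system n, IsSolution h e) ∧ ¬ IsPeriodic h) := by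
  obtain ⟨a, b, hab⟩ := exists_pair_ne A
  have noncomm : ¬ Commute (FreeMonoid.of a) (FreeMonoid.of b) :=
    mt freeMonoid_commute_of_of_iff.1 hab
  refine ⟨two_mul_ncard_system hn, ?_, ?_⟩
  · rintro e ⟨i, j, hij, rfl⟩
    refine ⟨markedHom (FreeMonoid.of a) (FreeMonoid.of b) {i, j}, ?_, ?_⟩
    · rintro e' ⟨k, l, hkl, rfl⟩ hne
      rw [isSolution_markedHom_iff noncomm]
      rintro ⟨hk, hl⟩
      have same_indices : k = i ∧ l = j := by grind
      exact hne (eqn_inj.2 same_indices)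
    · simp [isSolution_markedHom_iff noncomm]
  · refine ⟨markedHom (FreeMonoid.of a) (FreeMonoid.of b) ∅, ?_, not_isPeriodic_markedHom noncomm ∅⟩
    rintro e ⟨i, j, -, rfl⟩
    simp [isSolution_markedHom_iff noncomm]

/-- For every `n ≥ 4`, the above system of word equations in `n` variables consists of
`(n² - 5n + 6)/2` equations, is independent (with solutions taken in the free monoid on
two letters), and has a nonperiodic solution. Hence is'(n) ≥ (n² − 5n + 6)/2. -/
theorem system_card_independent_nonperiodic (n : ℕ) (hn : 4 ≤ n) :
    2 * ((system n).ncard : ℤ) = (n : ℤ) ^ 2 - 5 * n + 6 ∧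
    (∀ e ∈ system n, ∃ h : FreeMonoid (Fin 2 ⊕ Fin (n - 2)) →* FreeMonoid (Fin 2),
      (∀ e' ∈ system n, e' ≠ e → IsSolution h e') ∧ ¬ IsSolution h e) ∧
    (∃ h : FreeMonoid (Fin 2 ⊕ Fin (n - 2)) →* FreeMonoid (Fin 2),
      (∀ e ∈ system n, IsSolution h e) ∧ ¬ IsPeriodic h) :=
  system_card_independent_nonperiodic_general (Fin 2) n (by lia)
end

section
/- For every n ≥ 3 there is a decreasing chain of (n² + 3n − 4)/2 word equations in n variables, with solutions taken in the free monoid on two letters. Explicitly, with variables x, y, z_1, …, z_{n−2}, such a chain is obtained by listing, in order: the equations x y z_k = z_k x y for k ∈ {1, …, n−2}; then the equations x y x z_k y z_k = z_k x z_k y x y for k ∈ {1, …, n−2}; then the equations x y x z_i z_j y z_i z_j = z_i z_j x z_i z_j y x y for 1 ≤ i < j ≤ n−2; then the equations x z_k = z_k x for k ∈ {1, …, n−2}; then x y = y x; then x = 1; y = 1; and z_k = 1 for k ∈ {1, …, n−2}. Hence dc(n) ≥ (n² + 3n − 4)/2. -/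
/-- A list of equations `L` is a decreasing chain (with solutions in `M`) if for every
position `i` there is a morphism that is a solution of all earlier equations of the list
but not of the `i`-th one. -/
def IsDecreasingChain {Ξ : Type*} (M : Type*) [Monoid M]
    (L : List (FreeMonoid Ξ × FreeMonoid Ξ)) : Prop :=
  ∀ i : Fin L.length, ∃ h : FreeMonoid Ξ →* M,
    (∀ j : Fin L.length, j < i → IsSolution h (L.get j)) ∧ ¬ IsSolution h (L.get i)

/-- The list of equations: first `x y z_k = z_k x y` for all `k`; then
`x y x z_k y z_k = z_k x z_k y x y` for all `k`; then
`x y x z_i z_j y z_i z_j = z_i z_j x z_i z_j y x y` for all `i < j`; then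
`x z_k = z_k x` for all `k`; then `x y = y x`; then `x = 1`; `y = 1`; and
`z_k = 1` for all `k`. -/
def chain (n : ℕ) : List (FreeMonoid (Fin 2 ⊕ Fin (n - 2)) × FreeMonoid (Fin 2 ⊕ Fin (n - 2))) :=
  ((List.finRange (n - 2)).map fun k => (xv * yv * zv k, zv k * xv * yv)) ++
  ((List.finRange (n - 2)).map fun k =>
    (xv * yv * xv * zv k * yv * zv k, zv k * xv * zv k * yv * xv * yv)) ++
  ((List.finRange (n - 2)).flatMap fun i =>
    (((List.finRange (n - 2)).filter fun j => i < j).map fun j =>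
      (xv * yv * xv * zv i * zv j * yv * zv i * zv j,
       zv i * zv j * xv * zv i * zv j * yv * xv * yv))) ++
  ((List.finRange (n - 2)).map fun k => (xv * zv k, zv k * xv)) ++
  [(xv * yv, yv * xv), (xv, 1), (yv, 1)] ++
  ((List.finRange (n - 2)).map fun k => (zv k, 1))

/-!
Call `z` balanced for `(x, y)` if `x y x z y z = z x z y x y`. Put `u = x y` and `z = u ^ e`: then
both sides of `x y z = z x y` agree, and balance reads `u c u ^ e = u ^ e c u` with
`c = x u ^ e y`. It holds for `e ≤ 1`, and if `x` and `y` are distinct letters it fails for `e = 2`.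
Evaluate each `z_k` at a power `u ^ e_k`. A single exponent `2`, at `k`, makes
`x y x z_k y z_k = z_k x z_k y x y` the first equation of the chain to fail and breaks no other
equation of its family; two exponents `1`, at `i < j`, do the same for the equation for `z_i z_j`,
and a single exponent `1` for `x z_k = z_k x`. The other equations are separated by making most
variables trivial.
-/

section DecreasingChain

variable {Ξ M ι : Type*} [Monoid M] {L : List (FreeMonoid Ξ × FreeMonoid Ξ)}

theorem IsDecreasingChain.nil : IsDecreasingChain M ([] : List (FreeMonoid Ξ × FreeMonoid Ξ)) :=
  fun i => i.elim0

theorem IsDecreasingChain.concat {E : FreeMonoid Ξ × FreeMonoid Ξ} (hL : IsDecreasingChain M L)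
    (hE : ∃ h : FreeMonoid Ξ →* M, (∀ F ∈ L, IsSolution h F) ∧ ¬ IsSolution h E) :
    IsDecreasingChain M (L ++ [E]) := by
  simp only [IsDecreasingChain, Fin.forall_iff, List.get_eq_getElem, Fin.mk_lt_mk,
    List.length_append, List.length_singleton] at hL ⊢
  intro i hi
  rcases (Nat.lt_succ_iff.mp hi).lt_or_eq with hiL | rfl
  · obtain ⟨h, hsol, hnot⟩ := hL i hiL
    refine ⟨h, fun j _ hji => ?_, ?_⟩
    · simpa [List.getElem_append_left (hji.trans hiL)] using hsol j (hji.trans hiL) hji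
    · simpa [List.getElem_append_left hiL] using hnot
  · obtain ⟨h, hsol, hnot⟩ := hE
    refine ⟨h, fun j _ hji => ?_, by simpa using hnot⟩
    simpa [List.getElem_append_left hji] using hsol _ (List.getElem_mem hji)

theorem IsDecreasingChain.append_map {f : ι → FreeMonoid Ξ × FreeMonoid Ξ} {l : List ι}
    (hL : IsDecreasingChain M L) (hl : l.Nodup)
    (hf : ∀ k ∈ l, ∃ h : FreeMonoid Ξ →* M, (∀ F ∈ L, IsSolution h F) ∧
      (∀ j ∈ l, j ≠ k → IsSolution h (f j)) ∧ ¬ IsSolution h (f k)) :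
    IsDecreasingChain M (L ++ l.map f) := by
  induction l using List.reverseRecOn with
  | nil => simpa using hL
  | append_singleton l k ih =>
    obtain ⟨hnodup, -, hdisj⟩ := List.nodup_append.mp hl
    have hprefix : IsDecreasingChain M (L ++ l.map f) := by
      refine ih hnodup fun i hi => ?_
      obtain ⟨h, hsol, hrest, hnot⟩ := hf i (List.mem_append_left _ hi)
      exact ⟨h, hsol, fun j hj => hrest j (List.mem_append_left _ hj), hnot⟩
    obtain ⟨h, hsol, hrest, hnot⟩ := hf k (by simp)
    rw [List.map_append, List.map_singleton, ← List.append_assoc]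
    refine hprefix.concat ⟨h, ?_, hnot⟩
    rw [List.forall_mem_append, List.forall_mem_map]
    exact ⟨hsol, fun j hj => hrest j (List.mem_append_left _ hj) (hdisj j hj k (by simp))⟩

end DecreasingChain

section BalancedTriple

variable {M : Type*} [Monoid M] {a b : M}

/-- The triple `(a, b, c)` solves the word equation `x y x z y z = z x z y x y`. -/
def BalancedTriple (a b c : M) : Prop :=
  a * b * a * c * b * c = c * a * c * b * a * b

theorem balancedTriple_pow_of_le_one {e : ℕ} (he : e ≤ 1) : BalancedTriple a b ((a * b) ^ e) := by
  interval_cases e <;> simp [BalancedTriple, mul_assoc]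

theorem balancedTriple_of_commute {c : M} (hac : Commute a c) (habc : Commute (a * b) c) :
    BalancedTriple a b c := by
  have hacb : a * c * b = a * b * c := by
    rw [hac.eq, mul_assoc, ← habc.eq]
  calc a * b * a * c * b * c = a * b * (a * c * b) * c := by simp only [mul_assoc]
    _ = (a * b) ^ 2 * c ^ 2 := by
      rw [hacb, pow_two, pow_two]
      simp only [mul_assoc]
    _ = c * (a * b * c) * (a * b) := by
      rw [(habc.pow_pow 2 2).eq, habc.eq, pow_two, pow_two]
      simp only [mul_assoc]
    _ = c * a * c * b * a * b := by
      rw [← hacb]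
      simp only [mul_assoc]

theorem not_commute_mul_of_not_balancedTriple_pow {e : ℕ}
    (hab : ¬ BalancedTriple a b ((a * b) ^ e)) : ¬ Commute a (a * b) := fun h =>
  hab (balancedTriple_of_commute (h.pow_right e) (Commute.self_pow _ e))

-- The two words first differ at their third letter.
theorem not_balancedTriple_freeMonoid_of {α : Type*} {i j : α} (hij : i ≠ j) :
    ¬ BalancedTriple (FreeMonoid.of i) (FreeMonoid.of j)
      ((FreeMonoid.of i * FreeMonoid.of j) ^ 2) := fun h => by
  simpa [pow_two, hij] using congrArg FreeMonoid.toList h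

end BalancedTriple

section Equations

variable {Ξ M : Type*} [Monoid M]

/-- The word equation `U V = V U`. -/
def commEqn (U V : FreeMonoid Ξ) : FreeMonoid Ξ × FreeMonoid Ξ :=
  (U * V, V * U)

/-- The word equation `U V U W V W = W U W V U V`, whose solutions are the morphisms with
a `BalancedTriple` of values at `U`, `V`, `W`. -/
def balancedEqn (U V W : FreeMonoid Ξ) : FreeMonoid Ξ × FreeMonoid Ξ :=
  (U * V * U * W * V * W, W * U * W * V * U * V)

@[simp]
theorem isSolution_commEqn {h : FreeMonoid Ξ →* M} {U V : FreeMonoid Ξ} :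
    IsSolution h (commEqn U V) ↔ Commute (h U) (h V) := by
  simp [IsSolution, commEqn, Commute, SemiconjBy]

@[simp]
theorem isSolution_balancedEqn {h : FreeMonoid Ξ →* M} {U V W : FreeMonoid Ξ} :
    IsSolution h (balancedEqn U V W) ↔ BalancedTriple (h U) (h V) (h W) := by
  simp [IsSolution, balancedEqn, BalancedTriple]

@[simp]
theorem isSolution_mk_one {h : FreeMonoid Ξ →* M} {U : FreeMonoid Ξ} :
    IsSolution h (U, 1) ↔ h U = 1 := by
  simp [IsSolution]

end Equations

/-- The pairs `(i, j)` with `i < j`, in lexicographic order. -/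
def ltPairs (m : ℕ) : List (Fin m × Fin m) :=
  (List.finRange m ×ˢ List.finRange m).filter fun p => p.1 < p.2

theorem mem_ltPairs {m : ℕ} {p : Fin m × Fin m} : p ∈ ltPairs m ↔ p.1 < p.2 := by
  simp [ltPairs, List.mem_product (a := p.1) (b := p.2)]

theorem nodup_ltPairs (m : ℕ) : (ltPairs m).Nodup :=
  ((List.nodup_finRange m).product (List.nodup_finRange m)).filter _

theorem length_ltPairs (m : ℕ) : (ltPairs m).length = m.choose 2 := by
  have hfinset : (ltPairs m).toFinset = ({p | p.1 < p.2} : Finset (Fin m × Fin m)) := by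
    ext p
    simp [mem_ltPairs]
  rw [← List.toFinset_card_of_nodup (nodup_ltPairs m), hfinset, Fintype.card_product_filter_lt,
    Fintype.card_fin]

theorem map_ltPairs {α : Type*} {m : ℕ} (f : Fin m → Fin m → α) :
    (ltPairs m).map (fun p => f p.1 p.2) =
      (List.finRange m).flatMap fun i => ((List.finRange m).filter fun j => i < j).map (f i) := by
  simp [ltPairs, SProd.sprod, List.product, List.filter_flatMap, List.map_flatMap, List.filter_map,
    Function.comp_def]

section Chain

theorem chain_eq_append (n : ℕ) : chain n =
    (List.finRange (n - 2)).map (fun k => commEqn (xv * yv) (zv k)) ++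
    (List.finRange (n - 2)).map (fun k => balancedEqn xv yv (zv k)) ++
    (ltPairs (n - 2)).map (fun p => balancedEqn xv yv (zv p.1 * zv p.2)) ++
    (List.finRange (n - 2)).map (fun k => commEqn xv (zv k)) ++
    [commEqn xv yv] ++ [(xv, 1)] ++ [(yv, 1)] ++
    (List.finRange (n - 2)).map (fun k => (zv k, 1)) := by
  rw [map_ltPairs fun i j => balancedEqn xv yv (zv i * zv j)]
  simp [chain, commEqn, balancedEqn, mul_assoc]

theorem length_chain {n : ℕ} (hn : 2 ≤ n) : (chain n).length = (n ^ 2 + 3 * n - 4) / 2 := by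
  obtain ⟨m, rfl⟩ := Nat.exists_eq_add_of_le' hn
  have hlength : (chain (m + 2)).length = m.choose 2 + 4 * m + 3 := by
    simp only [chain_eq_append, List.length_append, List.length_map, List.length_finRange,
      length_ltPairs, List.length_singleton, Nat.add_sub_cancel]
    ring
  have htwice : (m + 2) ^ 2 + 3 * (m + 2) - 4 = (m.choose 2 + 4 * m + 3) * 2 := by
    have hchoose : m.choose 2 * 2 + m = m * m := by
      rw [Nat.choose_two_right, Nat.div_mul_cancel (Nat.even_mul_pred_self m).two_dvd,
        Nat.mul_sub_one, Nat.sub_add_cancel (Nat.le_mul_self m)]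
    rw [Nat.sub_eq_iff_eq_add (by lia)]
    linear_combination -hchoose
  rw [hlength, htwice, Nat.mul_div_cancel _ two_pos]

variable {M : Type*} [Monoid M] {n : ℕ}

/-- The morphism with value `a` at `x`, `b` at `y` and `c k` at `z_k`. -/
def assign (a b : M) (c : Fin (n - 2) → M) : FreeMonoid (Fin 2 ⊕ Fin (n - 2)) →* M :=
  FreeMonoid.lift (Sum.elim ![a, b] c)

@[simp]
theorem assign_xv (a b : M) (c : Fin (n - 2) → M) : assign a b c xv = a := by
  simp [assign, xv]

@[simp]
theorem assign_yv (a b : M) (c : Fin (n - 2) → M) : assign a b c yv = b := by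
  simp [assign, yv]

@[simp]
theorem assign_zv (a b : M) (c : Fin (n - 2) → M) (k : Fin (n - 2)) :
    assign a b c (zv k) = c k := by
  simp [assign, zv]

/-- The morphism with `x ↦ a`, `y ↦ b` and `z_k ↦ (a b) ^ e k`. -/
def powAssign (a b : M) (e : Fin (n - 2) → ℕ) : FreeMonoid (Fin 2 ⊕ Fin (n - 2)) →* M :=
  assign a b fun k => (a * b) ^ e k

variable {a b : M} {e : Fin (n - 2) → ℕ}

@[simp]
theorem powAssign_xv : powAssign a b e xv = a := by
  simp [powAssign]

@[simp]
theorem powAssign_yv : powAssign a b e yv = b := by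
  simp [powAssign]

@[simp]
theorem powAssign_zv (k : Fin (n - 2)) : powAssign a b e (zv k) = (a * b) ^ e k := by
  simp [powAssign]

theorem isDecreasingChain_chain (hab : ¬ BalancedTriple a b ((a * b) ^ 2)) (n : ℕ) :
    IsDecreasingChain M (chain n) := by
  have hu := not_commute_mul_of_not_balancedTriple_pow hab
  have hcomm : ¬ Commute a b := fun h => hu ((Commute.refl a).mul_right h)
  have ha : a ≠ 1 := fun h => hcomm (h ▸ Commute.one_left b)
  have hnodup := List.nodup_finRange (n - 2)
  rw [chain_eq_append]
  refine IsDecreasingChain.nil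
    |>.append_map hnodup (fun k _ => ⟨assign b 1 (Pi.mulSingle k a), ?comm_mul_z⟩)
    |>.append_map hnodup (fun k _ => ⟨powAssign a b (Pi.single k 2), ?balanced_z⟩)
    |>.append_map (nodup_ltPairs _) (fun p hp =>
      ⟨powAssign a b (Pi.single p.1 1 + Pi.single p.2 1), ?balanced_mul_z⟩)
    |>.append_map hnodup (fun k _ => ⟨powAssign a b (Pi.single k 1), ?comm_z⟩)
    |>.concat ⟨powAssign a b 0, ?comm_y⟩
    |>.concat ⟨assign a 1 1, ?x_eq_one⟩
    |>.concat ⟨assign 1 a 1, ?y_eq_one⟩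
    |>.append_map hnodup (fun k _ => ⟨assign 1 1 (Pi.mulSingle k a), ?z_eq_one⟩) <;>
    simp only [List.forall_mem_append, List.forall_mem_map, List.forall_mem_singleton,
      isSolution_commEqn, isSolution_balancedEqn, isSolution_mk_one, map_mul, assign_xv, assign_yv,
      assign_zv, powAssign_xv, powAssign_yv, powAssign_zv, ← pow_add]
  case comm_mul_z => simpa +contextual [Commute.symm_iff (a := b)] using hcomm
  case balanced_z => simpa +contextual [BalancedTriple] using hab
  case balanced_mul_z =>
    have hlt := mem_ltPairs.mp hp
    refine ⟨⟨by simp, fun j _ => balancedTriple_pow_of_le_one ?_⟩,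
      fun q hq _ => balancedTriple_pow_of_le_one ?_, ?_⟩
    · grind [Pi.add_apply]
    · grind [Pi.add_apply, mem_ltPairs]
    · simpa [hlt.ne, hlt.ne'] using hab
  case comm_z =>
    refine ⟨⟨⟨by simp, fun j _ => balancedTriple_pow_of_le_one (by grind)⟩,
      fun q hq => balancedTriple_pow_of_le_one (by grind [mem_ltPairs])⟩, ?_⟩
    simpa +contextual using hu
  case comm_y => simpa [BalancedTriple, mul_assoc] using hcomm
  case x_eq_one => simpa [BalancedTriple] using ha
  case y_eq_one => simpa [BalancedTriple] using ha
  case z_eq_one => simpa +contextual [BalancedTriple, mul_assoc] using ha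

theorem chain_length_and_decreasing_general (hab : ¬ BalancedTriple a b ((a * b) ^ 2))
    (hn : 2 ≤ n) :
    (chain n).length = (n ^ 2 + 3 * n - 4) / 2 ∧ IsDecreasingChain M (chain n) :=
  ⟨length_chain hn, isDecreasingChain_chain hab n⟩

end Chain

/-- For every `n ≥ 3`, the above list of word equations in `n` variables has length
`(n² + 3n - 4)/2` and is a decreasing chain, with solutions taken in the free monoid on
two letters. Hence dc(n) ≥ (n² + 3n − 4)/2. -/
theorem chain_length_and_decreasing (n : ℕ) (hn : 3 ≤ n) :
    (chain n).length = (n ^ 2 + 3 * n - 4) / 2 ∧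
    IsDecreasingChain (FreeMonoid (Fin 2)) (chain n) :=
  chain_length_and_decreasing_general
    (not_balancedTriple_freeMonoid_of Fin.zero_ne_one) (by lia)
end
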